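/- Let j ≥ 1 be an integer and r ∈ ℝ. Then lim_{t→0⁺} t^{j} Σ_{n=0}^∞ (n+r)^{2j−1} e^{−(n+r)² t} = (j−1)!/2; equivalently, 𝓖_{j,r}(t) := t^{j−1/2} Σ_{n=0}^∞ (n+r)^{2j−1} e^{−(n+r)² t} satisfies 𝓖_{j,r}(t) ∼ (j−1)!/(2√t) as t → 0⁺. -/

import Mathlib

/-!
With `h = √t` and `f y = y ^ (2j-1) * exp (-y²)`, the quantity is `h * ∑ f (h (n + r))`, a Riemann
sum of mesh `h` for `∫₀^∞ f = Γ(j) / 2 = (j-1)! / 2`. It equals the integral over `[0, ∞)` of the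
step function `x ↦ f (h (⌊x / h⌋₊ + r))` (`sum_eq_integral_step`), which converges pointwise to `f`
as `h → 0⁺`. Since `|f y| ≤ C * exp (-|y|)` (`abs_gaussMoment_le`), for `h ≤ 1` the step functions
are dominated by a multiple of `exp (-x)` (`abs_step_le`), and dominated convergence applies.
-/

open Complex Real Filter Topology

/-- The summand at scale one, `y ^ k * exp (-y²)`. -/
noncomputable def gaussMoment (k : ℕ) (y : ℝ) : ℝ := y ^ k * Real.exp (-y ^ 2)

lemma continuous_gaussMoment (k : ℕ) : Continuous (gaussMoment k) := by
  unfold gaussMoment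
  fun_prop

/-- Combines `|y| ^ k ≤ k! * exp |y|` with `-y² ≤ 1 - 2 |y|`. -/
lemma abs_gaussMoment_le (k : ℕ) (y : ℝ) :
    |gaussMoment k y| ≤ k.factorial * Real.exp 1 * Real.exp (-|y|) := by
  have h1 : |y| ^ k ≤ k.factorial * Real.exp |y| := by
    have := Real.pow_div_factorial_le_exp |y| (abs_nonneg y) k
    rwa [div_le_iff₀' (by positivity)] at this
  have h2 : Real.exp (-y ^ 2) ≤ Real.exp (1 - 2 * |y|) := by
    apply Real.exp_le_exp.mpr
    nlinarith [sq_nonneg (|y| - 1), sq_abs y]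
  calc |gaussMoment k y| = |y| ^ k * Real.exp (-y ^ 2) := by
        rw [gaussMoment, abs_mul, abs_pow, Real.abs_exp]
    _ ≤ (k.factorial * Real.exp |y|) * Real.exp (1 - 2 * |y|) := by gcongr
    _ = k.factorial * Real.exp 1 * Real.exp (-|y|) := by
        rw [mul_assoc, mul_assoc, ← Real.exp_add, ← Real.exp_add]
        ring_nf

/-- The sample point of the Riemann sum lies within `1 + |r|` of `x`. -/
lemma abs_step_le (k : ℕ) (r : ℝ) {h x : ℝ} (h0 : 0 < h) (h1 : h ≤ 1) :
    |gaussMoment k (h * ((⌊x / h⌋₊ : ℝ) + r))| ≤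
      k.factorial * Real.exp 1 * Real.exp (1 + |r|) * Real.exp (-x) := by
  refine (abs_gaussMoment_le k _).trans ?_
  rw [mul_assoc _ (Real.exp (1 + |r|)), ← Real.exp_add]
  gcongr
  have hf : x < h * (⌊x / h⌋₊ + 1) := by
    have := Nat.lt_floor_add_one (x / h)
    rwa [div_lt_iff₀' h0] at this
  have hr : -|r| ≤ h * r := by
    have : |h * r| ≤ |r| := by
      rw [abs_mul, abs_of_pos h0]
      exact mul_le_of_le_one_left (abs_nonneg r) h1
    linarith [neg_abs_le (h * r)]
  have := le_abs_self (h * ((⌊x / h⌋₊ : ℝ) + r))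
  linarith

lemma measurable_step (k : ℕ) (r h : ℝ) :
    Measurable fun x : ℝ => gaussMoment k (h * ((⌊x / h⌋₊ : ℝ) + r)) := by
  refine (continuous_gaussMoment k).measurable.comp ?_
  have : Measurable fun x : ℝ => ((⌊x / h⌋₊ : ℕ) : ℝ) :=
    measurable_from_top.comp (Nat.measurable_floor.comp (measurable_id.div_const h))
  exact (this.add_const r).const_mul h

lemma integrableOn_bound (c : ℝ) :
    MeasureTheory.IntegrableOn (fun x : ℝ => c * Real.exp (-x)) (Set.Ici 0) := by
  rw [integrableOn_Ici_iff_integrableOn_Ioi]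
  exact (integrableOn_exp_neg_Ioi 0).const_mul c

lemma sum_eq_integral_step (k : ℕ) (r : ℝ) {h : ℝ} (h0 : 0 < h) (h1 : h ≤ 1) :
    h * ∑' n : ℕ, gaussMoment k (h * (n + r)) =
      ∫ x in Set.Ici (0 : ℝ), gaussMoment k (h * ((⌊x / h⌋₊ : ℝ) + r)) := by
  have hfloor : ∀ (n : ℕ) (x : ℝ), x ∈ Set.Ico (n * h) ((n + 1) * h) → ⌊x / h⌋₊ = n := by
    rintro n x ⟨hx1, hx2⟩
    have hx : n ≤ x / h := by rwa [le_div_iff₀ h0]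
    rw [Nat.floor_eq_iff (n.cast_nonneg.trans hx)]
    exact ⟨hx, by rwa [div_lt_iff₀ h0]⟩
  have hU : ⋃ n : ℕ, Set.Ico ((n : ℝ) * h) ((n + 1) * h) = Set.Ici 0 := by
    ext x
    simp only [Set.mem_iUnion, Set.mem_Ici]
    constructor
    · rintro ⟨n, hn, -⟩
      exact (by positivity : (0 : ℝ) ≤ n * h).trans hn
    · intro hx
      refine ⟨⌊x / h⌋₊, ?_, ?_⟩
      · rw [← le_div_iff₀ h0]
        exact Nat.floor_le (by positivity)
      · rw [← div_lt_iff₀ h0]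
        exact Nat.lt_floor_add_one _
  have hint : MeasureTheory.IntegrableOn
      (fun x : ℝ => gaussMoment k (h * ((⌊x / h⌋₊ : ℝ) + r))) (Set.Ici 0) :=
    (integrableOn_bound _).mono' (measurable_step k r h).aestronglyMeasurable
      (Eventually.of_forall fun _ => abs_step_le k r h0 h1)
  rw [← hU] at hint ⊢
  rw [MeasureTheory.integral_iUnion (fun _ => measurableSet_Ico) ?_ hint, ← tsum_mul_left]
  · refine tsum_congr fun n => ?_
    rw [MeasureTheory.setIntegral_congr_fun (g := fun _ => gaussMoment k (h * (n + r)))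
      measurableSet_Ico fun x hx => by simp only [hfloor n x hx]]
    rw [MeasureTheory.setIntegral_const, MeasureTheory.measureReal_def, Real.volume_Ico,
      ENNReal.toReal_ofReal (by linarith), smul_eq_mul]
    ring
  · intro m n hmn
    refine Set.disjoint_left.mpr fun x hm hn => hmn ?_
    rw [← hfloor m x hm, hfloor n x hn]

lemma integral_gaussMoment (j : ℕ) (hj : 1 ≤ j) :
    ∫ x in Set.Ici (0 : ℝ), gaussMoment (2 * j - 1) x = (Nat.factorial (j - 1) : ℝ) / 2 := by
  obtain ⟨i, rfl⟩ := Nat.exists_eq_add_of_le' hj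
  have := integral_rpow_mul_exp_neg_rpow (p := 2) (q := ((2 * i + 1 : ℕ) : ℝ)) two_pos
    (by have : (0 : ℝ) ≤ ((2 * i + 1 : ℕ) : ℝ) := Nat.cast_nonneg _
        linarith)
  rw [show (((2 * i + 1 : ℕ) : ℝ) + 1) / 2 = (i : ℝ) + 1 by push_cast; ring,
    Real.Gamma_nat_eq_factorial] at this
  rw [MeasureTheory.integral_Ici_eq_integral_Ioi, Nat.add_sub_cancel,
    show 2 * (i + 1) - 1 = 2 * i + 1 by omega]
  simp only [Real.rpow_natCast, Real.rpow_two] at this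
  simp only [gaussMoment]
  rw [this]
  ring

lemma tendsto_riemannSum (k : ℕ) (r : ℝ) :
    Tendsto (fun h : ℝ => h * ∑' n : ℕ, gaussMoment k (h * (n + r))) (𝓝[>] 0)
      (𝓝 (∫ x in Set.Ici (0 : ℝ), gaussMoment k x)) := by
  have hsmall : ∀ᶠ h : ℝ in 𝓝[>] 0, 0 < h ∧ h ≤ 1 := by
    filter_upwards [Ioc_mem_nhdsGT (zero_lt_one' ℝ)] with h hh using hh
  refine Tendsto.congr' (hsmall.mono fun h hh => (sum_eq_integral_step k r hh.1 hh.2).symm) ?_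
  refine MeasureTheory.tendsto_integral_filter_of_dominated_convergence _
    (Eventually.of_forall fun h => (measurable_step k r h).aestronglyMeasurable)
    (hsmall.mono fun h hh => Eventually.of_forall fun _ => abs_step_le k r hh.1 hh.2)
    (integrableOn_bound _) ?_
  refine (MeasureTheory.ae_restrict_iff' measurableSet_Ici).mpr (Eventually.of_forall ?_)
  intro x hx
  refine ((continuous_gaussMoment k).tendsto x).comp ?_
  have hid : Tendsto (fun h : ℝ => h) (𝓝[>] 0) (𝓝 0) := tendsto_nhdsWithin_of_tendsto_nhds tendsto_id
  -- `x - h < h * ⌊x / h⌋₊ ≤ x`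
  have hfl : Tendsto (fun h : ℝ => h * (⌊x / h⌋₊ : ℝ)) (𝓝[>] 0) (𝓝 x) := by
    refine tendsto_of_tendsto_of_tendsto_of_le_of_le' (g := fun h => x - h) (h := fun _ => x)
      (by simpa using tendsto_const_nhds.sub hid) tendsto_const_nhds ?_ ?_
    · filter_upwards [hsmall] with h hh
      have := Nat.lt_floor_add_one (x / h)
      rw [div_lt_iff₀' hh.1] at this
      linarith
    · filter_upwards [hsmall] with h hh
      rw [← le_div_iff₀' hh.1]
      exact Nat.floor_le (div_nonneg hx hh.1.le)
  simpa [mul_add] using hfl.add (hid.mul_const r)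

/-- `lim_{t→0⁺} t^j Σ_{n≥0} (n+r)^{2j-1} e^{-(n+r)²t} = (j-1)!/2`, i.e.
`𝓖_{j,r}(t) = t^{j-1/2} Σ_{n≥0} (n+r)^{2j-1} e^{-(n+r)²t} ∼ (j-1)!/(2√t)` as `t → 0⁺`
((3.5) of the paper). -/
theorem stmt13 (j : ℕ) (hj : 1 ≤ j) (r : ℝ) :
    Tendsto (fun t : ℝ =>
        t ^ j * ∑' n : ℕ, ((n : ℝ) + r) ^ (2 * j - 1) * Real.exp (-((n : ℝ) + r) ^ 2 * t))
      (𝓝[>] (0 : ℝ)) (𝓝 ((Nat.factorial (j - 1) : ℝ) / 2)) := by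
  have hsqrt : Tendsto Real.sqrt (𝓝[>] 0) (𝓝[>] 0) := by
    refine tendsto_nhdsWithin_iff.mpr ⟨?_, ?_⟩
    · have := Real.continuous_sqrt.tendsto 0
      rw [Real.sqrt_zero] at this
      exact this.mono_left nhdsWithin_le_nhds
    · filter_upwards [self_mem_nhdsWithin] with t ht using Real.sqrt_pos.mpr ht
  rw [← integral_gaussMoment j hj]
  refine ((tendsto_riemannSum (2 * j - 1) r).comp hsqrt).congr' ?_
  filter_upwards [self_mem_nhdsWithin] with t ht
  have hs : √t ^ 2 = t := Real.sq_sqrt (le_of_lt ht)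
  have hp : t ^ j = √t * √t ^ (2 * j - 1) := by
    rw [← pow_succ', Nat.sub_add_cancel (by omega), pow_mul, hs]
  simp only [Function.comp_apply]
  rw [hp, mul_assoc]
  congr 1
  rw [← tsum_mul_left]
  refine tsum_congr fun n => ?_
  rw [gaussMoment, mul_pow, mul_pow, hs, mul_assoc]
  ring_nf
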